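/- Let t be an odd positive integer and let M be a matroid with an odd t-cyclic ordering e_1, e_2, …, e_n. Then for every index i ∈ {1,…,n} and every j with 1 ≤ j ≤ n/2, the set X = {e_{i+1}, e_{i+2}, …, e_{i+j}} satisfies λ(X) = j if j < t−1, and λ(X) = t−1 if j ≥ t−1. -/

import Mathlib

open Set

namespace CyclicArr

variable {α : Type*}

/-- `C` is a circuit of the matroid `M`: a minimal dependent set. -/
def Cct (M : Matroid α) (C : Set α) : Prop := Minimal M.Dep C

/-- The set of `len` consecutive elements `{e_i, e_{i+1}, …, e_{i+len-1}}`
in a cyclic ordering `e`, subscripts mod `n`. -/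
def seg {n : ℕ} (e : ZMod n → α) (i : ℤ) (len : ℕ) : Set α :=
  (fun k : ℕ => e ((i + k : ℤ) : ZMod n)) '' Set.Iio len

/-- `e` is a cyclic ordering of (the ground set of) `M`. -/
def CyclicOrd {n : ℕ} (M : Matroid α) (e : ZMod n → α) : Prop :=
  Function.Injective e ∧ Set.range e = M.E

/-- `e` is a cyclic `(t-1, t)`-ordering of `M`: every `t-1` consecutive elements
are contained in a `t`-element circuit and a `t`-element cocircuit. -/
def CyclicPropOrd {n : ℕ} (M : Matroid α) (t : ℕ) (e : ZMod n → α) : Prop :=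
  CyclicOrd M e ∧
  ∀ i : ℤ, (∃ C, Cct M C ∧ C.ncard = t ∧ seg e i (t-1) ⊆ C) ∧
           (∃ C, Cct M✶ C ∧ C.ncard = t ∧ seg e i (t-1) ⊆ C)

/-- `M` has the cyclic `(t-1, t)`-property: it admits a cyclic `(t-1, t)`-ordering. -/
def HasCycProp (M : Matroid α) (t : ℕ) : Prop :=
  ∃ (n : ℕ) (e : ZMod n → α), CyclicPropOrd M t e

/-- `e` is an odd `t`-cyclic ordering of `M` (with `n ≥ t+1`): for all odd `i ∈ {1,…,n}`,
`{e_i, …, e_{i+t-1}}` is a `t`-element circuit and `{e_{i+1}, …, e_{i+t}}` is a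
`t`-element cocircuit. -/
def OddTCycOrd {n : ℕ} (M : Matroid α) (t : ℕ) (e : ZMod n → α) : Prop :=
  CyclicOrd M e ∧ t + 1 ≤ n ∧
  ∀ i : ℕ, Odd i → 1 ≤ i → i ≤ n →
    (Cct M (seg e (i : ℤ) t) ∧ (seg e (i : ℤ) t).ncard = t) ∧
    (Cct M✶ (seg e ((i : ℤ) + 1) t) ∧ (seg e ((i : ℤ) + 1) t).ncard = t)

/-- `e` is an even `t`-cyclic ordering of `M` (with `n ≥ t+1`): for all odd `i ∈ {1,…,n}`,
`{e_i, …, e_{i+t-1}}` is both a `t`-element circuit and a `t`-element cocircuit. -/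
def EvenTCycOrd {n : ℕ} (M : Matroid α) (t : ℕ) (e : ZMod n → α) : Prop :=
  CyclicOrd M e ∧ t + 1 ≤ n ∧
  ∀ i : ℕ, Odd i → 1 ≤ i → i ≤ n →
    Cct M (seg e (i : ℤ) t) ∧ Cct M✶ (seg e (i : ℤ) t) ∧ (seg e (i : ℤ) t).ncard = t

/-- `M` is `t`-cyclic: it admits an odd or even `t`-cyclic ordering. -/
def TCyclic (M : Matroid α) (t : ℕ) : Prop :=
  ∃ (n : ℕ) (e : ZMod n → α), OddTCycOrd M t e ∨ EvenTCycOrd M t e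

/-- The rank of a set `X` in a matroid `M`: the maximum cardinality of an
independent subset of `X` (for a finite matroid). -/
noncomputable def rkf (M : Matroid α) (X : Set α) : ℕ :=
  sSup {k | ∃ I, M.Indep I ∧ I ⊆ X ∧ I.ncard = k}

/-- The connectivity function `λ(X) = r(X) + r*(X) - |X|`, valued in `ℤ`. -/
noncomputable def lam (M : Matroid α) (X : Set α) : ℤ :=
  (rkf M X : ℤ) + (rkf M✶ X : ℤ) - (X.ncard : ℤ)

/-- The local connectivity `⊓(X, Y) = r(X) + r(Y) - r(X ∪ Y)`, valued in `ℤ`. -/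
noncomputable def pic (M : Matroid α) (X Y : Set α) : ℤ :=
  (rkf M X : ℤ) + (rkf M Y : ℤ) - (rkf M (X ∪ Y) : ℤ)

/-- `X` is exactly `k`-separating: `λ(X) = k - 1`. -/
noncomputable def ExactSep (M : Matroid α) (k : ℕ) (X : Set α) : Prop :=
  lam M X = (k : ℤ) - 1

/-- `(P_1, …, P_m)` is a concatenation of the cyclic ordering `e`, where `P i` is the
block of `l i` consecutive elements starting at position `a i`, and the blocks occur in
cyclic order and partition the ground set. -/
def IsConcat {n m : ℕ} (e : ZMod n → α) (P : ZMod m → Set α) (a l : ZMod m → ℕ) : Prop :=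
  (∀ i, 1 ≤ l i) ∧
  (∀ i, ((a (i + 1) : ZMod n)) = ((a i + l i : ℕ) : ZMod n)) ∧
  (∀ i, P i = seg e (a i : ℤ) (l i)) ∧
  Set.univ.PairwiseDisjoint P ∧
  (⋃ i, P i) = Set.range e

/-- `(P_1, …, P_m)` is a `k`-flower of `M`: a partition of the ground set into nonempty
sets, each exactly `k`-separating, with consecutive unions exactly `k`-separating. -/
noncomputable def IsFlower (M : Matroid α) (k : ℕ) {m : ℕ} (P : ZMod m → Set α) : Prop :=
  2 ≤ m ∧
  Set.univ.PairwiseDisjoint P ∧ (⋃ i, P i) = M.E ∧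
  (∀ i, (P i).Nonempty) ∧
  (∀ i, ExactSep M k (P i)) ∧
  (3 ≤ m → ∀ i, ExactSep M k (P i ∪ P (i + 1)))

/-- `I ⊆ ZMod m` is a set of consecutive members in the cyclic order. -/
def CycInterval {m : ℕ} (I : Set (ZMod m)) : Prop :=
  ∃ (a : ZMod m) (len : ℕ), 0 < len ∧ I = (fun k : ℕ => a + (k : ZMod m)) '' Set.Iio len

/-- A `k`-daisy: a `k`-flower in which the union of a proper nonempty collection of
petals is exactly `k`-separating precisely when the petals are consecutive. -/
noncomputable def IsDaisy (M : Matroid α) (k : ℕ) {m : ℕ} (P : ZMod m → Set α) : Prop :=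
  IsFlower M k P ∧
  ∀ I : Set (ZMod m), I.Nonempty → I ≠ Set.univ →
    (ExactSep M k (⋃ i ∈ I, P i) ↔ CycInterval I)

/-- A `k`-anemone: a `k`-flower in which the union of every proper nonempty collection
of petals is exactly `k`-separating. -/
noncomputable def IsAnemone (M : Matroid α) (k : ℕ) {m : ℕ} (P : ZMod m → Set α) : Prop :=
  IsFlower M k P ∧
  ∀ I : Set (ZMod m), I.Nonempty → I ≠ Set.univ → ExactSep M k (⋃ i ∈ I, P i)

/-!
Up to `t - 1` consecutive elements are both independent and coindependent, so `λ` of such a segment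
is its length. Beyond that length every added element completes a circuit or a cocircuit with its
`t - 1` predecessors, so `λ` cannot increase along longer segments; since `λ` is invariant under
complementation and the complement of a long segment is a short one, it cannot decrease either
before the complement has length `t - 1`.

The circuits and cocircuits are given at odd indices in `{1, …, n}` only. They recur at all indices
of the same parity because `n` is even: otherwise some circuit and some cocircuit of the ordering
would meet in a single element.
-/

section Rank

variable {M : Matroid α} {X : Set α} {x : α}

lemma rkf_eq_toNat_eRk (M : Matroid α) (X : Set α) : rkf M X = (M.eRk X).toNat := by
  obtain ⟨I, hI⟩ := M.exists_isBasis' X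
  rw [← hI.encard_eq_eRk, ← ncard_def, rkf]
  rcases I.finite_or_infinite with hfin | hinf
  · refine IsGreatest.csSup_eq ⟨⟨I, hI.indep, hI.subset, rfl⟩, ?_⟩
    rintro _ ⟨J, hJ, hJX, rfl⟩
    refine ENat.toNat_le_toNat ?_ hfin.encard_lt_top.ne
    exact (hJ.encard_le_eRk_of_subset hJX).trans_eq hI.encard_eq_eRk.symm
  · -- Both sides take the junk value `0`.
    rw [hinf.ncard]
    refine Nat.sSup_of_not_bddAbove fun ⟨b, hb⟩ ↦ ?_
    obtain ⟨J, hJI, -, hJ⟩ := hinf.exists_subset_ncard_eq (b + 1)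
    have := hb ⟨J, hI.indep.subset hJI, hJI.trans hI.subset, hJ⟩
    omega

lemma coe_rkf (h : M.IsRkFinite X) : (rkf M X : ℕ∞) = M.eRk X := by
  rw [rkf_eq_toNat_eRk, ENat.natCast_toNat h.eRk_lt_top.ne]

lemma rkf_of_indep (h : M.Indep X) : rkf M X = X.ncard := by
  rw [rkf_eq_toNat_eRk, h.eRk_eq_encard, ncard_def]

lemma rkf_insert_le (h : M.IsRkFinite X) (x : α) : rkf M (insert x X) ≤ rkf M X + 1 := by
  have hle := M.eRk_insert_le_add_one x X
  rw [← coe_rkf h, ← coe_rkf (h.insert x)] at hle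
  exact_mod_cast hle

lemma rkf_insert_of_mem_closure (hx : x ∈ M.closure X) : rkf M (insert x X) = rkf M X := by
  rw [rkf_eq_toNat_eRk, rkf_eq_toNat_eRk, ← M.eRk_closure_eq (insert x X),
    Matroid.closure_insert_eq_of_mem_closure hx, M.eRk_closure_eq]

lemma encard_add_encard_le_of_indep_of_coindep {I J : Set α} (hI : M.Indep I) (hJ : M.Coindep J) :
    I.encard + J.encard ≤ M.E.encard :=
  (add_le_add hI.encard_le_eRank hJ.encard_le_eRank).trans_eq M.eRank_add_eRank_dual

end Rank

section Connectivity

variable {M : Matroid α} {X : Set α} {x : α}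

lemma lam_dual (M : Matroid α) (X : Set α) : lam M✶ X = lam M X := by
  rw [lam, lam, M.dual_dual, add_comm (rkf M✶ X : ℤ)]

lemma lam_compl [M.Finite] (hX : X ⊆ M.E) : lam M (M.E \ X) = lam M X := by
  have hfin : ∀ {Y}, Y ⊆ M.E → Y.Finite := fun hY ↦ M.ground_finite.subset hY
  have dual_rank : ∀ Y ⊆ M.E, rkf M✶ Y + rkf M M.E = rkf M (M.E \ Y) + Y.ncard := by
    intro Y hY
    have h := M.eRk_dual_add_eRank Y hY
    rw [← M.eRk_ground, ← coe_rkf (M✶.isRkFinite_of_finite (hfin hY)),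
      ← coe_rkf (M.isRkFinite_of_finite M.ground_finite),
      ← coe_rkf (M.isRkFinite_of_finite (hfin sdiff_subset)), ← (hfin hY).cast_ncard_eq] at h
    exact_mod_cast h
  have rank_X := dual_rank X hX
  have rank_compl := dual_rank (M.E \ X) sdiff_subset
  rw [sdiff_sdiff_cancel_left hX] at rank_compl
  unfold lam
  omega

lemma lam_of_indep_of_coindep (hI : M.Indep X) (hI' : M.Coindep X) : lam M X = X.ncard := by
  rw [lam, rkf_of_indep hI, rkf_of_indep hI', add_sub_cancel_right]

lemma lam_insert_le_of_mem_closure (hX : X.Finite) (hxX : x ∉ X) (hx : x ∈ M.closure X) :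
    lam M (insert x X) ≤ lam M X := by
  have hdual := rkf_insert_le (M✶.isRkFinite_of_finite hX) x
  rw [lam, lam, rkf_insert_of_mem_closure hx, ncard_insert_of_notMem hxX hX]
  omega

end Connectivity

section Segment

variable {n : ℕ} {e : ZMod n → α} {i i' : ℤ} {k l : ℕ}

lemma seg_finite (e : ZMod n → α) (i : ℤ) (l : ℕ) : (seg e i l).Finite :=
  (finite_Iio l).image _

lemma seg_subset_range (e : ZMod n → α) (i : ℤ) (l : ℕ) : seg e i l ⊆ range e := by
  rintro _ ⟨k, -, rfl⟩
  exact mem_range_self _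

lemma seg_congr (e : ZMod n → α) (h : (i : ZMod n) = i') (l : ℕ) : seg e i l = seg e i' l := by
  simp only [seg, Int.cast_add, h]

lemma seg_one (e : ZMod n → α) (i : ℤ) : seg e i 1 = {e i} := by
  simp [seg]

lemma seg_add (e : ZMod n → α) (i : ℤ) (k l : ℕ) :
    seg e i (k + l) = seg e i k ∪ seg e (i + k) l := by
  ext x
  constructor
  · rintro ⟨m, hm, rfl⟩
    rw [mem_Iio] at hm
    rcases lt_or_ge m k with hmk | hkm
    · exact .inl ⟨m, hmk, rfl⟩
    · obtain ⟨d, rfl⟩ := Nat.exists_eq_add_of_le hkm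
      exact .inr ⟨d, by grind, by simp [add_assoc]⟩
  · rintro (⟨m, hm, rfl⟩ | ⟨m, hm, rfl⟩)
    · exact ⟨m, by grind, rfl⟩
    · exact ⟨k + m, by grind, by simp [add_assoc]⟩

lemma seg_succ (e : ZMod n → α) (i : ℤ) (l : ℕ) :
    seg e i (l + 1) = insert (e (i + l : ℤ)) (seg e i l) := by
  rw [seg_add, seg_one, union_singleton]

lemma seg_subset_seg (e : ZMod n → α) (h : i ≤ i') (h' : i' + l ≤ i + k) :
    seg e i' l ⊆ seg e i k := by
  obtain ⟨d, rfl⟩ := Int.le.dest h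
  obtain ⟨c, rfl⟩ : ∃ c, k = d + l + c := Nat.exists_eq_add_of_le (by omega)
  rw [seg_add, seg_add]
  exact subset_union_right.trans subset_union_left

lemma eq_of_apply_intCast_eq (he : Function.Injective e) {a b : ℤ} (h : e a = e b)
    (hab : |b - a| < n) : a = b := by
  have hdvd := (ZMod.intCast_eq_intCast_iff_dvd_sub a b n).1 (he h)
  have := Int.eq_zero_of_abs_lt_dvd hdvd hab
  omega

lemma ncard_seg (he : Function.Injective e) (i : ℤ) (h : l ≤ n) : (seg e i l).ncard = l := by
  rw [seg, InjOn.ncard_image, ncard_Iio_nat]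
  intro a ha b hb hab
  rw [mem_Iio] at ha hb
  have := eq_of_apply_intCast_eq he hab (by grind)
  omega

lemma disjoint_seg_seg (he : Function.Injective e) (i : ℤ) (h : k + l ≤ n) :
    Disjoint (seg e i k) (seg e (i + k) l) := by
  rw [disjoint_left]
  rintro _ ⟨a, ha, rfl⟩ ⟨b, hb, hab⟩
  rw [mem_Iio] at ha hb
  have := eq_of_apply_intCast_eq he hab (by grind)
  omega

lemma notMem_seg_of_lt (he : Function.Injective e) (i : ℤ) (h : l < n) :
    e (i + l : ℤ) ∉ seg e i l := by
  have hdisj := disjoint_seg_seg he i (l := 1) h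
  rwa [seg_one, disjoint_singleton_right] at hdisj

lemma seg_inter_seg (he : Function.Injective e) (i : ℤ) (h : k + l < n) :
    seg e i (k + 1) ∩ seg e (i + k) (l + 1) = {e (i + k : ℤ)} := by
  rw [seg_add, union_inter_distrib_right, (disjoint_seg_seg he i h).inter_eq, empty_union, seg_one,
    inter_eq_left, ← seg_one]
  exact seg_subset_seg e le_rfl (by omega)

lemma seg_self (he : Function.Injective e) [NeZero n] (i : ℤ) : seg e i n = range e := by
  refine eq_of_subset_of_ncard_le (seg_subset_range e i n) ?_ (finite_range e)
  rw [ncard_seg he i le_rfl, ← image_univ, ncard_image_of_injective _ he, ncard_univ,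
    Nat.card_zmod]

lemma range_sdiff_seg (he : Function.Injective e) [NeZero n] (i : ℤ) (h : l ≤ n) :
    range e \ seg e i l = seg e (i + l) (n - l) := by
  have hsplit := seg_add e i l (n - l)
  rw [Nat.add_sub_cancel' h, seg_self he] at hsplit
  rw [hsplit, union_sdiff_cancel_left (disjoint_seg_seg he i (by omega)).inter_eq.subset]

end Segment

section SegmentCircuit

variable {M : Matroid α} {n : ℕ} {e : ZMod n → α} {i k : ℤ} {l t : ℕ}

lemma indep_seg_of_isCircuit (he : Function.Injective e) (ht : t ≤ n)
    (hC : M.IsCircuit (seg e k t)) (hl : l < t) (hki : k ≤ i) (hik : i + l ≤ k + t) :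
    M.Indep (seg e i l) := by
  refine hC.ssubset_indep ((seg_subset_seg e hki hik).ssubset_of_ne fun heq ↦ ?_)
  have hcard := congr_arg ncard heq
  rw [ncard_seg he i (hl.le.trans ht), ncard_seg he k ht] at hcard
  exact hl.ne hcard

lemma last_mem_closure_of_isCircuit (hC : M.IsCircuit (seg e i (l + 1))) :
    e (i + l : ℤ) ∈ M.closure (seg e i l) := by
  rw [seg_succ] at hC
  exact M.closure_subset_closure (sdiff_singleton_subset_iff.2 subset_rfl)
    (hC.mem_closure_sdiff_singleton_of_mem (mem_insert _ _))

lemma lam_seg_succ_le_of_isCircuit (he : Function.Injective e) {d : ℕ} (hn : d + l < n)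
    (hC : M.IsCircuit (seg e (i + d) (l + 1))) :
    lam M (seg e i (d + l + 1)) ≤ lam M (seg e i (d + l)) := by
  rw [seg_succ]
  refine lam_insert_le_of_mem_closure (seg_finite e i _) (notMem_seg_of_lt he i hn) ?_
  have hlast := last_mem_closure_of_isCircuit hC
  rw [add_assoc, ← Nat.cast_add] at hlast
  exact M.closure_subset_closure (seg_subset_seg e (by omega) (by omega)) hlast

lemma not_isCircuit_of_isCocircuit_seg (he : Function.Injective e) (ht : t ≠ 0) (hn : 2 * t ≤ n + 1)
    (hK : M.IsCocircuit (seg e i t)) : ¬ M.IsCircuit (seg e (i + t - 1) t) := by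
  intro hC
  obtain ⟨s, rfl⟩ := Nat.exists_eq_succ_of_ne_zero ht
  rw [Nat.cast_succ, ← add_assoc, add_sub_cancel_right] at hC
  refine hC.inter_isCocircuit_ne_singleton hK (e := e (i + s : ℤ)) ?_
  rw [inter_comm, seg_inter_seg he i (by omega)]

end SegmentCircuit

lemma exists_odd_nat_intCast_eq {n : ℕ} [NeZero n] (hn : Even n) {i : ℤ} (hi : Odd i) :
    ∃ k : ℕ, Odd k ∧ k ≤ n ∧ ((k : ℤ) : ZMod n) = i := by
  have hn0 : (n : ℤ) ≠ 0 := Nat.cast_ne_zero.2 (NeZero.ne n)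
  obtain ⟨k, hk⟩ := Int.eq_ofNat_of_zero_le (Int.emod_nonneg i hn0)
  have hkn : (k : ℤ) < n := hk ▸ Int.emod_lt_of_pos i (by omega)
  have hkodd : Odd k := by
    rw [← Int.odd_coe_nat, ← hk, Int.emod_def]
    exact hi.sub_even ((Int.even_coe_nat n).2 hn |>.mul_right _)
  exact ⟨k, hkodd, by omega, by rw [← hk, ZMod.intCast_mod]⟩

namespace OddTCycOrd

variable {M : Matroid α} {t n : ℕ} {e : ZMod n → α}

lemma injective (he : OddTCycOrd M t e) : Function.Injective e := he.1.1

lemma range_eq (he : OddTCycOrd M t e) : range e = M.E := he.1.2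

lemma lt_length (he : OddTCycOrd M t e) : t < n := he.2.1

lemma one_le_length (he : OddTCycOrd M t e) : 1 ≤ n := Nat.one_le_of_lt he.lt_length

lemma neZero_length (he : OddTCycOrd M t e) : NeZero n := ⟨he.lt_length.ne_bot⟩

lemma matroid_finite (he : OddTCycOrd M t e) : M.Finite :=
  have := he.neZero_length
  ⟨he.range_eq ▸ finite_range e⟩

lemma isCircuit_seg_natCast (he : OddTCycOrd M t e) {i : ℕ} (hi : Odd i) (hin : i ≤ n) :
    M.IsCircuit (seg e i t) :=
  (he.2.2 i hi hi.pos hin).1.1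

lemma isCocircuit_seg_natCast_add_one (he : OddTCycOrd M t e) {i : ℕ} (hi : Odd i) (hin : i ≤ n) :
    M.IsCocircuit (seg e (i + 1) t) :=
  (he.2.2 i hi hi.pos hin).2.1

lemma ne_zero (he : OddTCycOrd M t e) : t ≠ 0 := by
  rintro rfl
  simpa [seg] using (he.isCircuit_seg_natCast odd_one he.one_le_length).nonempty

lemma two_mul_le (he : OddTCycOrd M t e) : 2 * t ≤ n + 2 := by
  have := he.neZero_length
  have ht := he.ne_zero
  have htn := he.lt_length
  have hI : M.Indep (seg e 1 (t - 1)) := indep_seg_of_isCircuit he.injective htn.le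
    (he.isCircuit_seg_natCast odd_one he.one_le_length) (by omega) le_rfl (by omega)
  have hI' : M.Coindep (seg e 2 (t - 1)) := indep_seg_of_isCircuit he.injective htn.le
    (he.isCocircuit_seg_natCast_add_one odd_one he.one_le_length) (by omega) le_rfl (by omega)
  have hle := encard_add_encard_le_of_indep_of_coindep hI hI'
  rw [← he.range_eq, ← seg_self he.injective 0, ← (seg_finite ..).cast_ncard_eq,
    ← (seg_finite ..).cast_ncard_eq, ← (seg_finite ..).cast_ncard_eq,
    ncard_seg he.injective _ (by omega), ncard_seg he.injective _ (by omega),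
    ncard_seg he.injective _ le_rfl] at hle
  norm_cast at hle
  omega

lemma even_length (he : OddTCycOrd M t e) : Even n := by
  by_contra hn
  rw [Nat.not_even_iff_odd] at hn
  have ht := he.ne_zero
  have htn := he.lt_length
  have hle : 2 * t ≤ n + 1 := by
    have := he.two_mul_le
    grind
  rcases Nat.even_or_odd t with heven | hodd
  · refine not_isCircuit_of_isCocircuit_seg he.injective ht hle
      (he.isCocircuit_seg_natCast_add_one odd_one he.one_le_length) ?_
    have hC := he.isCircuit_seg_natCast heven.add_one htn
    convert hC using 2
    grind
  · -- The cocircuit ends at `e_{n+1} = e_1`, where the circuit starts.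
    have hK := he.isCocircuit_seg_natCast_add_one (i := n + 1 - t) (by grind) (by omega)
    refine not_isCircuit_of_isCocircuit_seg he.injective ht hle hK ?_
    have hC := he.isCircuit_seg_natCast odd_one he.one_le_length
    rwa [seg_congr e (i' := (1 : ℕ))]
    push_cast [Nat.cast_sub (show t ≤ n + 1 by omega)]
    rw [CharP.cast_eq_zero (ZMod n) n]
    ring

lemma isCircuit_seg (he : OddTCycOrd M t e) {i : ℤ} (hi : Odd i) : M.IsCircuit (seg e i t) := by
  have := he.neZero_length
  obtain ⟨k, hk, hkn, hki⟩ := exists_odd_nat_intCast_eq he.even_length hi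
  rw [← seg_congr e hki]
  exact he.isCircuit_seg_natCast hk hkn

lemma isCocircuit_seg (he : OddTCycOrd M t e) {i : ℤ} (hi : Even i) :
    M.IsCocircuit (seg e i t) := by
  have := he.neZero_length
  obtain ⟨k, hk, hkn, hki⟩ := exists_odd_nat_intCast_eq he.even_length (hi.sub_odd odd_one)
  rw [← seg_congr e (i := k + 1) (by rw [Int.cast_add, hki]; simp)]
  exact he.isCocircuit_seg_natCast_add_one hk hkn

lemma indep_seg (he : OddTCycOrd M t e) (i : ℤ) {j : ℕ} (hj : j < t) : M.Indep (seg e i j) := by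
  rcases Int.even_or_odd i with hi | hi
  · exact indep_seg_of_isCircuit he.injective he.lt_length.le
      (he.isCircuit_seg (hi.sub_odd odd_one)) hj (by omega) (by omega)
  · exact indep_seg_of_isCircuit he.injective he.lt_length.le
      (he.isCircuit_seg hi) hj le_rfl (by omega)

lemma coindep_seg (he : OddTCycOrd M t e) (i : ℤ) {j : ℕ} (hj : j < t) : M.Coindep (seg e i j) := by
  rcases Int.even_or_odd i with hi | hi
  · exact indep_seg_of_isCircuit he.injective he.lt_length.le
      (he.isCocircuit_seg hi) hj le_rfl (by omega)
  · exact indep_seg_of_isCircuit he.injective he.lt_length.le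
      (he.isCocircuit_seg (hi.sub_odd odd_one)) hj (by omega) (by omega)

lemma lam_seg_of_lt (he : OddTCycOrd M t e) (i : ℤ) {j : ℕ} (hj : j < t) :
    lam M (seg e i j) = j := by
  rw [lam_of_indep_of_coindep (he.indep_seg i hj) (he.coindep_seg i hj),
    ncard_seg he.injective i (hj.trans he.lt_length).le]

lemma lam_seg_compl (he : OddTCycOrd M t e) (i : ℤ) {j : ℕ} (hj : j ≤ n) :
    lam M (seg e (i + j) (n - j)) = lam M (seg e i j) := by
  have := he.neZero_length
  have := he.matroid_finite
  rw [← range_sdiff_seg he.injective i hj, he.range_eq,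
    lam_compl (he.range_eq ▸ seg_subset_range e i j)]

lemma lam_seg_succ_le (he : OddTCycOrd M t e) (i : ℤ) {j : ℕ} (hj : t ≤ j + 1) (hjn : j < n) :
    lam M (seg e i (j + 1)) ≤ lam M (seg e i j) := by
  obtain ⟨s, rfl⟩ := Nat.exists_eq_succ_of_ne_zero he.ne_zero
  obtain ⟨d, rfl⟩ := Nat.exists_eq_add_of_le' (Nat.le_of_succ_le_succ hj)
  rcases Int.even_or_odd (i + d) with hi | hi
  · rw [← lam_dual, ← lam_dual M]
    exact lam_seg_succ_le_of_isCircuit he.injective hjn (he.isCocircuit_seg hi)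
  · exact lam_seg_succ_le_of_isCircuit he.injective hjn (he.isCircuit_seg hi)

lemma lam_seg_le_of_le (he : OddTCycOrd M t e) (i : ℤ) {j k : ℕ} (hj : t ≤ j + 1)
    (hjk : j ≤ k) (hk : k ≤ n) : lam M (seg e i k) ≤ lam M (seg e i j) := by
  induction k, hjk using Nat.le_induction with
  | base => exact le_rfl
  | succ k hjk ih =>
    exact (he.lam_seg_succ_le i (by omega) (by omega)).trans (ih (by omega))

lemma lam_seg_of_le_of_le (he : OddTCycOrd M t e) (i : ℤ) {j : ℕ} (hj : t ≤ j + 1)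
    (hjn : j + t ≤ n + 1) : lam M (seg e i j) = t - 1 := by
  have ht := he.ne_zero
  have short : ∀ k : ℤ, lam M (seg e k (t - 1)) = t - 1 := fun k ↦ by
    rw [he.lam_seg_of_lt k (by omega), Nat.cast_pred (by omega)]
  apply le_antisymm
  · exact (he.lam_seg_le_of_le i (by omega) (by omega) (by omega)).trans_eq (short i)
  · calc (t : ℤ) - 1
        = lam M (seg e (i + (n - (t - 1) : ℕ)) (n - (n - (t - 1)))) := by
          rw [Nat.sub_sub_self (by have := he.lt_length; omega), short]
      _ = lam M (seg e i (n - (t - 1))) := he.lam_seg_compl i (by omega)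
      _ ≤ lam M (seg e i j) := he.lam_seg_le_of_le i hj (by omega) (by omega)

end OddTCycOrd

theorem statement_11_general {M : Matroid α} {t n : ℕ} {e : ZMod n → α} (he : OddTCycOrd M t e)
    (i : ℤ) {j : ℕ} (hj : j ≤ n) :
    lam M (seg e i j) = min (min (j : ℤ) (n - j)) (t - 1) := by
  have hn := he.two_mul_le
  rcases lt_or_ge j t with hjt | htj
  · rw [he.lam_seg_of_lt i hjt]
    omega
  rcases lt_or_ge (n - j) t with hnj | hnj
  · rw [← he.lam_seg_compl i hj, he.lam_seg_of_lt _ hnj]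
    omega
  · rw [he.lam_seg_of_le_of_le i (by omega) (by omega)]
    omega

/-- Let `t` be an odd positive integer and `e` an odd `t`-cyclic
ordering of `M`. For every `i ∈ {1,…,n}` and `1 ≤ j ≤ n/2`, the set
`X = {e_{i+1},…,e_{i+j}}` satisfies `λ(X) = j` if `j < t-1` and `λ(X) = t-1` otherwise. -/
theorem statement_11 (M : Matroid α) (t n : ℕ) (ht : 1 ≤ t) (htodd : Odd t)
    (e : ZMod n → α) (he : OddTCycOrd M t e) :
    ∀ i : ℕ, 1 ≤ i → i ≤ n → ∀ j : ℕ, 1 ≤ j → 2 * j ≤ n →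
      (j < t - 1 → lam M (seg e ((i : ℤ) + 1) j) = (j : ℤ)) ∧
      (t - 1 ≤ j → lam M (seg e ((i : ℤ) + 1) j) = (t : ℤ) - 1) := by
  intro i _ _ j _ hjn
  rw [statement_11_general he _ (by omega)]
  omega

end CyclicArr
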